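/- Fix real constants α, β, γ and let (u,v) be a regular solution of the Schrödinger–Korteweg–de Vries system. Then the energy I₂(t) = ∫_ℝ ( αγ·v(t,x)·|u(t,x)|² − (α/6)·v(t,x)³ + (βγ/2)·|u(t,x)|⁴ + (α/2)·(∂ₓv(t,x))² + γ·|∂ₓu(t,x)|² ) dx is independent of t: I₂(t) = I₂(0) for all t ∈ ℝ. -/

import Mathlib

open MeasureTheory Filter

/-- A regular solution of the Schrödinger–Korteweg–de Vries system
    `i ∂ₜu + ∂ₓ²u = α u v + β u |u|²`,
    `∂ₜv + ∂ₓ³v + v ∂ₓv = γ ∂ₓ(|u|²)`: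
    `u, v` are smooth in `(t,x)`, Schwartz in `x` for each fixed `t`, satisfy the
    equations pointwise, and have uniformly-in-time bounded `H¹ₓ` norms. -/
def IsSKdVSolution (α β γ : ℝ) (u : ℝ → ℝ → ℂ) (v : ℝ → ℝ → ℝ) : Prop :=
  ContDiff ℝ (⊤ : ℕ∞) (fun p : ℝ × ℝ => u p.1 p.2) ∧
  ContDiff ℝ (⊤ : ℕ∞) (fun p : ℝ × ℝ => v p.1 p.2) ∧
  (∀ t : ℝ, ∃ f : SchwartzMap ℝ ℂ, ∀ x, f x = u t x) ∧
  (∀ t : ℝ, ∃ g : SchwartzMap ℝ ℝ, ∀ x, g x = v t x) ∧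
  (∀ t x : ℝ,
    Complex.I * deriv (fun s => u s x) t + iteratedDeriv 2 (u t) x
      = (α : ℂ) * u t x * (v t x : ℂ) + (β : ℂ) * u t x * (‖u t x‖ : ℂ) ^ 2) ∧
  (∀ t x : ℝ,
    deriv (fun s => v s x) t + iteratedDeriv 3 (v t) x + v t x * deriv (v t) x
      = γ * deriv (fun y => ‖u t y‖ ^ 2) x) ∧
  (∃ C : ℝ, ∀ t : ℝ,
    (∫ x : ℝ, ‖u t x‖ ^ 2) + (∫ x : ℝ, ‖deriv (u t) x‖ ^ 2) +
      (∫ x : ℝ, (v t x) ^ 2) + (∫ x : ℝ, (deriv (v t) x) ^ 2) ≤ C)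

/-!
Formally, `I₂` is conserved because its density obeys a local balance law whose source is a total
derivative. The flux of that law contains `(∂ₓ²v)²` and similar terms, however, and nothing controls
second derivatives or spatial decay uniformly in time. Replacing every field `f` by its mean
`A f` over `[x, x + h]` cures this: `∂ₓ²(A f)` is a difference quotient of `∂ₓf`, hence
bounded in `L²` uniformly in time.

Averaging would ruin the algebra of the nonlinear term were it not for the identity
`A(v ∂ₓv) = M v · ∂ₓ(A v)`, where `M v` is the mean of `v` over the endpoints of `[x, x + h]`.
With the cubic density `M v · (A v)²` in place of `v³`, all remaining fluxes are bounded in `L¹`.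
Integrating the balance law against a cutoff `φ(η x)` and letting `η → 0` expresses the increment
of the averaged energy as the time integral of a source that is bounded in `L¹` uniformly in `h`
and `t`. As `h → 0` the source becomes a total derivative and the increment tends to zero.
-/

namespace SKdV

open Topology
open scoped ContDiff ENNReal NNReal SchwartzMap

section ParametricIntegral

variable {H E : Type*} [NormedAddCommGroup H] [NormedSpace ℝ H] [FiniteDimensional ℝ H]
  [NormedAddCommGroup E] [NormedSpace ℝ E]

theorem hasFDerivAt_intervalIntegral {F : H × ℝ → E} (hF : ContDiff ℝ 1 F) (a b : ℝ) (x : H) :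
    HasFDerivAt (fun y => ∫ s in a..b, F (y, s))
      (∫ s in a..b, (fderiv ℝ F (x, s)).comp (.inl ℝ H ℝ)) x := by
  have hF' : Continuous fun y : H × ℝ => (fderiv ℝ F y).comp (.inl ℝ H ℝ) :=
    (hF.continuous_fderiv one_ne_zero).clm_comp continuous_const
  obtain ⟨C, hC⟩ := ((isCompact_closedBall x 1).prod
    (isCompact_uIcc (a := a) (b := b))).exists_bound_of_continuousOn hF'.continuousOn
  refine (intervalIntegral.hasFDerivAt_integral_of_dominated_of_fderiv_le
    (bound := fun _ => C) (Metric.closedBall_mem_nhds x one_pos)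
    (F' := fun y s => (fderiv ℝ F (y, s)).comp (.inl ℝ H ℝ)) ?_ ?_ ?_ ?_ ?_ ?_)
  · exact .of_forall fun y => Continuous.aestronglyMeasurable (by fun_prop)
  · exact Continuous.intervalIntegrable (by fun_prop) _ _
  · exact Continuous.aestronglyMeasurable (hF'.comp (by fun_prop))
  · exact .of_forall fun s hs y hy => hC (y, s) ⟨hy, Set.uIoc_subset_uIcc hs⟩
  · exact intervalIntegrable_const
  · refine .of_forall fun s _ y _ => ?_
    exact ((hF.differentiable one_ne_zero) (y, s)).hasFDerivAt.comp y (hasFDerivAt_prodMk_left y s)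

theorem contDiff_intervalIntegral {F : H × ℝ → E} (hF : ContDiff ℝ ∞ F) (a b : ℝ) :
    ContDiff ℝ ∞ fun y => ∫ s in a..b, F (y, s) := by
  refine contDiff_infty.2 fun n => ?_
  induction n generalizing F with
  | zero =>
    exact contDiff_zero.2
      (intervalIntegral.continuous_parametric_intervalIntegral_of_continuous'
        (f := fun y s => F (y, s)) hF.continuous a b)
  | succ n ih =>
    have hderiv := hasFDerivAt_intervalIntegral (hF.of_le (mod_cast le_top)) a b
    push_cast
    refine contDiff_succ_iff_fderiv_apply.2 ⟨fun x => (hderiv x).differentiableAt,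
      by simp, fun y => ?_⟩
    have hdir : ContDiff ℝ ∞ fun z => fderiv ℝ F z (y, 0) :=
      (hF.fderiv_right (by simp)).clm_apply contDiff_const
    convert ih hdir using 2 with x
    have hint : IntervalIntegrable (fun s => (fderiv ℝ F (x, s)).comp (.inl ℝ H ℝ)) volume a b :=
      Continuous.intervalIntegrable (((hF.continuous_fderiv (by simp)).comp (by fun_prop)).clm_comp
        continuous_const) _ _
    simp [(hderiv x).fderiv, ContinuousLinearMap.intervalIntegral_apply hint]

end ParametricIntegral

/-! ### Smooth fields on the time-space plane -/

/-- The algebra of smooth real functions of time and space. -/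
def smoothFields : Subalgebra ℝ (ℝ → ℝ → ℝ) where
  carrier := {f | ContDiff ℝ ∞ (Function.uncurry f)}
  mul_mem' (hf : ContDiff ℝ ∞ _) (hg : ContDiff ℝ ∞ _) := hf.mul hg
  add_mem' (hf : ContDiff ℝ ∞ _) (hg : ContDiff ℝ ∞ _) := hf.add hg
  algebraMap_mem' c := show ContDiff ℝ ∞ fun _ : ℝ × ℝ => c from contDiff_const

theorem mem_smoothFields {f : ℝ → ℝ → ℝ} :
    f ∈ smoothFields ↔ ContDiff ℝ ∞ (Function.uncurry f) := Iff.rfl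

/-- A smooth real function of time and space. -/
abbrev SmoothField : Type := smoothFields

namespace SmoothField

instance : CoeFun SmoothField fun _ => ℝ → ℝ → ℝ := ⟨Subtype.val⟩

variable (f g : SmoothField) (t x : ℝ)

@[ext]
theorem ext {f g : SmoothField} (h : ∀ t x, f t x = g t x) : f = g :=
  Subtype.ext (funext₂ h)

@[simp] theorem add_apply : (f + g) t x = f t x + g t x := rfl
@[simp] theorem sub_apply : (f - g) t x = f t x - g t x := rfl
@[simp] theorem neg_apply : (-f) t x = -f t x := rfl
@[simp] theorem mul_apply : (f * g) t x = f t x * g t x := rfl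
@[simp] theorem smul_apply (c : ℝ) : (c • f) t x = c * f t x := rfl

protected theorem contDiff : ContDiff ℝ ∞ (Function.uncurry f) := f.2

protected theorem continuous : Continuous (Function.uncurry f) := f.contDiff.continuous

theorem continuous_slice : Continuous (f t) :=
  f.continuous.comp (Continuous.prodMk_right t)

theorem differentiableAt_uncurry (y : ℝ × ℝ) : DifferentiableAt ℝ (Function.uncurry f) y :=
  f.contDiff.differentiable (by simp) y

/-- The derivative of a smooth field in a fixed direction of the time-space plane. -/
noncomputable def dir (w : ℝ × ℝ) : Derivation ℝ SmoothField SmoothField :=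
  .mk' {
      toFun := fun f => ⟨fun t x => fderiv ℝ (Function.uncurry f) (t, x) w,
        mem_smoothFields.2 <|
          (f.contDiff.fderiv_right (m := ∞) (by simp)).clm_apply contDiff_const⟩
      map_add' := fun f g => by
        ext t x
        exact DFunLike.congr_fun (fderiv_add (f.differentiableAt_uncurry (t, x))
          (g.differentiableAt_uncurry (t, x))) w
      map_smul' := fun c f => by
        ext t x
        exact DFunLike.congr_fun (fderiv_const_smul (f.differentiableAt_uncurry (t, x)) c) w }
    fun f g => by
      ext t x
      exact DFunLike.congr_fun (fderiv_mul (f.differentiableAt_uncurry (t, x))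
        (g.differentiableAt_uncurry (t, x))) w

/-- The time derivative. -/
noncomputable abbrev dt : Derivation ℝ SmoothField SmoothField := dir (1, 0)

/-- The space derivative. -/
noncomputable abbrev dx : Derivation ℝ SmoothField SmoothField := dir (0, 1)

theorem hasDerivAt_dt : HasDerivAt (fun s => f s x) (dt f t x) t :=
  (f.differentiableAt_uncurry (t, x)).hasFDerivAt.comp_hasDerivAt (f := fun s => (s, x)) t
    ((hasDerivAt_id t).prodMk (hasDerivAt_const t x))

theorem hasDerivAt_dx : HasDerivAt (f t) (dx f t x) x :=
  (f.differentiableAt_uncurry (t, x)).hasFDerivAt.comp_hasDerivAt (f := fun y => (t, y)) x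
    ((hasDerivAt_const x t).prodMk (hasDerivAt_id x))

theorem dir_comm (w₁ w₂ : ℝ × ℝ) : dir w₁ (dir w₂ f) = dir w₂ (dir w₁ f) := by
  have hdir (a b y : ℝ × ℝ) :
      dir a (dir b f) y.1 y.2 = fderiv ℝ (fderiv ℝ (Function.uncurry f)) y a b := by
    have := fderiv_clm_apply
      ((f.contDiff.fderiv_right (m := ∞) (by simp)).differentiable (by simp) y)
      (differentiableAt_const b)
    simpa using! DFunLike.congr_fun this a
  ext t x
  rw [hdir w₁ w₂ (t, x), hdir w₂ w₁ (t, x)]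
  exact ((contDiff_infty.1 f.contDiff 2).contDiffAt.isSymmSndFDerivAt (by simp)) w₁ w₂

variable (h : ℝ) (f g : SmoothField) (t x : ℝ)

/-- The space translation `f ↦ f(t, x + h)`. -/
def shift : SmoothField →ₗ[ℝ] SmoothField where
  toFun f := ⟨fun t x => f t (x + h), mem_smoothFields.2 <|
    f.contDiff.comp (g := Function.uncurry f) (f := fun y : ℝ × ℝ => (y.1, y.2 + h)) (by fun_prop)⟩
  map_add' _ _ := rfl
  map_smul' _ _ := rfl

/-- The mean of `f(t, ·)` over the endpoints of `[x, x + h]`. -/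
noncomputable def mid : SmoothField →ₗ[ℝ] SmoothField :=
  (1 / 2 : ℝ) • (shift h + .id)

theorem contDiff_comp_shift_mul :
    ContDiff ℝ ∞ fun y : (ℝ × ℝ) × ℝ => f y.1.1 (y.1.2 + h * y.2) :=
  f.contDiff.comp (g := Function.uncurry f) (f := fun y : (ℝ × ℝ) × ℝ => (y.1.1, y.1.2 + h * y.2))
    (by fun_prop)

theorem intervalIntegrable_comp_shift (a b : ℝ) :
    IntervalIntegrable (fun s => f t (x + h * s)) volume a b :=
  ((f.contDiff_comp_shift_mul h).continuous.comp
    (Continuous.prodMk_right (t, x))).intervalIntegrable _ _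

/-- The mean of `f(t, ·)` over `[x, x + h]`. Written as an integral over `[0, 1]` it makes sense
for `h = 0`, where it is `f`. -/
noncomputable def avg : SmoothField →ₗ[ℝ] SmoothField where
  toFun f := ⟨fun t x => ∫ s in (0 : ℝ)..1, f t (x + h * s), mem_smoothFields.2 <|
    contDiff_intervalIntegral (f.contDiff_comp_shift_mul h) 0 1⟩
  map_add' f g := by
    ext t x
    exact intervalIntegral.integral_add (f.intervalIntegrable_comp_shift h t x 0 1)
      (g.intervalIntegrable_comp_shift h t x 0 1)
  map_smul' c f := by
    ext t x
    exact intervalIntegral.integral_const_mul c _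

theorem shift_apply : shift h f t x = f t (x + h) := rfl

theorem mid_apply : mid h f t x = (f t (x + h) + f t x) / 2 := by
  change 1 / 2 * (f t (x + h) + f t x) = _
  ring

theorem avg_apply : avg h f t x = ∫ s in (0 : ℝ)..1, f t (x + h * s) := rfl

@[simp] theorem avg_zero : avg 0 f = f := by ext; simp [avg_apply]

@[simp] theorem mid_zero : mid 0 f = f := by ext; simp [mid_apply]

theorem dir_shift (w : ℝ × ℝ) : dir w (shift h f) = shift h (dir w f) := by
  ext t x
  have hsum : Function.uncurry (shift h f) = fun y => Function.uncurry f (y + (0, h)) := by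
    ext ⟨t, x⟩
    simp [shift_apply]
  change fderiv ℝ (Function.uncurry (shift h f)) (t, x) w = _
  rw [hsum, fderiv_comp_add_right, Prod.mk_add_mk, add_zero]
  rfl

theorem dir_mid (w : ℝ × ℝ) : dir w (mid h f) = mid h (dir w f) := by
  change dir w ((1 / 2 : ℝ) • (shift h f + f)) = (1 / 2 : ℝ) • (shift h (dir w f) + dir w f)
  rw [Derivation.map_smul, map_add, dir_shift]

theorem dir_avg (w : ℝ × ℝ) : dir w (avg h f) = avg h (dir w f) := by
  ext t x
  have hF : ContDiff ℝ 1 fun y : (ℝ × ℝ) × ℝ => f y.1.1 (y.1.2 + h * y.2) :=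
    (f.contDiff_comp_shift_mul h).of_le (mod_cast le_top)
  have hint : IntervalIntegrable (fun s => (fderiv ℝ (fun y : (ℝ × ℝ) × ℝ =>
      f y.1.1 (y.1.2 + h * y.2)) ((t, x), s)).comp (.inl ℝ (ℝ × ℝ) ℝ)) volume 0 1 :=
    (((hF.continuous_fderiv one_ne_zero).comp (Continuous.prodMk_right (t, x))).clm_comp
      continuous_const).intervalIntegrable _ _
  have hslice (s : ℝ) : (fderiv ℝ (fun y : (ℝ × ℝ) × ℝ => f y.1.1 (y.1.2 + h * y.2))
      ((t, x), s)).comp (.inl ℝ (ℝ × ℝ) ℝ) w = dir w f t (x + h * s) := by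
    have hinl : HasFDerivAt (fun y : ℝ × ℝ => (y, s)) (.inl ℝ (ℝ × ℝ) ℝ) (t, x) :=
      hasFDerivAt_prodMk_left (t, x) s
    have := (hF.differentiable one_ne_zero ((t, x), s)).hasFDerivAt.comp (t, x) hinl
    rw [← shift_apply, ← dir_shift]
    exact DFunLike.congr_fun this.fderiv.symm w
  calc dir w (avg h f) t x
      = (∫ s in (0 : ℝ)..1, (fderiv ℝ (fun y : (ℝ × ℝ) × ℝ => f y.1.1 (y.1.2 + h * y.2))
          ((t, x), s)).comp (.inl ℝ (ℝ × ℝ) ℝ)) w :=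
        DFunLike.congr_fun (hasFDerivAt_intervalIntegral hF 0 1 (t, x)).fderiv w
    _ = avg h (dir w f) t x := by
        rw [ContinuousLinearMap.intervalIntegral_apply hint]
        simp only [hslice, avg_apply]

theorem smul_dx_avg : h • dx (avg h f) = shift h f - f := by
  ext t x
  have hderiv (s : ℝ) : HasDerivAt (fun s => f t (x + h * s)) (h * dx f t (x + h * s)) s := by
    have := (f.hasDerivAt_dx t (x + h * s)).comp s (((hasDerivAt_id s).const_mul h).const_add x)
    simpa [mul_comm] using! this
  have := intervalIntegral.integral_eq_sub_of_hasDerivAt (fun s _ => hderiv s)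
    (((dx f).intervalIntegrable_comp_shift h t x 0 1).const_mul h)
  simpa [dir_avg, avg_apply, shift_apply] using this

theorem avg_mul_dx_self (hh : h ≠ 0) : avg h (f * dx f) = mid h f * dx (avg h f) := by
  ext t x
  have hsq : h * dx (avg h (f * f)) t x = f t (x + h) * f t (x + h) - f t x * f t x :=
    congr_fun₂ (congr_arg Subtype.val (smul_dx_avg h (f * f))) t x
  have hlin : h * dx (avg h f) t x = f t (x + h) - f t x :=
    congr_fun₂ (congr_arg Subtype.val (smul_dx_avg h f)) t x
  rw [dir_avg, Derivation.leibniz, ← two_smul ℝ, map_smul] at hsq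
  rw [mul_apply, mid_apply]
  apply mul_left_cancel₀ hh
  simp only [smul_apply, smul_eq_mul] at hsq
  linear_combination hsq / 2 - (f t (x + h) + f t x) / 2 * hlin

end SmoothField

open SmoothField

/-! ### Bounds in `Lᵖ` uniform in time -/

theorem enorm_avg_rpow_le (h : ℝ) (f : SmoothField) (t x : ℝ) {p : ℝ≥0∞} (hp : 1 ≤ p)
    (hp' : p ≠ ⊤) :
    ‖avg h f t x‖ₑ ^ p.toReal ≤ ∫⁻ s in Set.Ioc (0 : ℝ) 1, ‖f t (x + h * s)‖ₑ ^ p.toReal := by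
  have hp₀ : 0 < p.toReal := ENNReal.toReal_pos (one_pos.trans_le hp).ne' hp'
  have : IsProbabilityMeasure (volume.restrict (Set.Ioc (0 : ℝ) 1)) := ⟨by simp⟩
  have hcont : Continuous fun s => f t (x + h * s) := (f.continuous_slice t).comp (by fun_prop)
  rw [← ENNReal.le_rpow_inv_iff hp₀, avg_apply, intervalIntegral.integral_of_le zero_le_one]
  calc ‖∫ s in Set.Ioc (0 : ℝ) 1, f t (x + h * s)‖ₑ
      ≤ eLpNorm (fun s => f t (x + h * s)) 1 (volume.restrict (Set.Ioc 0 1)) := by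
        rw [eLpNorm_one_eq_lintegral_enorm]
        exact enorm_integral_le_lintegral_enorm _
    _ ≤ eLpNorm (fun s => f t (x + h * s)) p (volume.restrict (Set.Ioc 0 1)) :=
        eLpNorm_le_eLpNorm_of_exponent_le hp hcont.aestronglyMeasurable
    _ = _ := by
        rw [eLpNorm_eq_lintegral_rpow_enorm_toReal (one_pos.trans_le hp).ne' hp', one_div]

theorem eLpNorm_avg_le (h : ℝ) (f : SmoothField) (t : ℝ) {p : ℝ≥0∞} (hp : 1 ≤ p) (hp' : p ≠ ⊤) :
    eLpNorm (avg h f t) p ≤ eLpNorm (f t) p := by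
  rw [eLpNorm_eq_lintegral_rpow_enorm_toReal (one_pos.trans_le hp).ne' hp',
    eLpNorm_eq_lintegral_rpow_enorm_toReal (one_pos.trans_le hp).ne' hp']
  refine ENNReal.rpow_le_rpow ?_ (by positivity)
  have hmeas : Measurable fun y : ℝ × ℝ => ‖f t (y.1 + h * y.2)‖ₑ ^ p.toReal :=
    (((f.continuous_slice t).comp (by fun_prop)).enorm.measurable).pow_const _
  calc ∫⁻ x, ‖avg h f t x‖ₑ ^ p.toReal
      ≤ ∫⁻ x, ∫⁻ s in Set.Ioc (0 : ℝ) 1, ‖f t (x + h * s)‖ₑ ^ p.toReal :=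
        lintegral_mono fun x => enorm_avg_rpow_le h f t x hp hp'
    _ = ∫⁻ s in Set.Ioc (0 : ℝ) 1, ∫⁻ x, ‖f t (x + h * s)‖ₑ ^ p.toReal :=
        lintegral_lintegral_swap hmeas.aemeasurable
    _ = ∫⁻ x, ‖f t x‖ₑ ^ p.toReal := by
        simp [lintegral_add_right_eq_self fun x => ‖f t x‖ₑ ^ p.toReal]

theorem eLpNorm_shift (h : ℝ) (f : SmoothField) (t : ℝ) (p : ℝ≥0∞) :
    eLpNorm (shift h f t) p = eLpNorm (f t) p :=
  eLpNorm_comp_measurePreserving (f.continuous_slice t).aestronglyMeasurable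
    (measurePreserving_add_right volume h)

theorem eLpNorm_two_eq_ofReal_sqrt {f : ℝ → ℝ} (hf : MemLp f 2) :
    eLpNorm f 2 = ENNReal.ofReal √(∫ x, f x ^ 2) := by
  rw [hf.eLpNorm_eq_integral_rpow_norm two_ne_zero ENNReal.ofNat_ne_top, Real.sqrt_eq_rpow]
  simp

theorem sq_le_integral_sq_add_integral_deriv_sq {f f' : ℝ → ℝ} (hf : ∀ x, HasDerivAt f (f' x) x)
    (hf₂ : MemLp f 2) (hf'₂ : MemLp f' 2) (x : ℝ) :
    f x ^ 2 ≤ (∫ y, f y ^ 2) + ∫ y, f' y ^ 2 := by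
  have hderiv (y : ℝ) : HasDerivAt (fun y => f y ^ 2) (2 * (f y * f' y)) y := by
    simpa [mul_assoc] using! (hf y).pow 2
  have hint : Integrable fun y => 2 * (f y * f' y) := (hf₂.integrable_mul hf'₂).const_mul 2
  have hsq : Integrable fun y => f y ^ 2 + f' y ^ 2 := hf₂.integrable_sq.add hf'₂.integrable_sq
  have hlim : Tendsto (fun y => f y ^ 2) atBot (𝓝 0) :=
    tendsto_zero_of_hasDerivAt_of_integrableOn_Iic (a := x) (fun y _ => hderiv y) hint.integrableOn
      hf₂.integrable_sq.integrableOn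
  calc f x ^ 2 = ∫ y in Set.Iic x, 2 * (f y * f' y) := by
        rw [integral_Iic_of_hasDerivAt_of_tendsto (hderiv x).continuousAt.continuousWithinAt
          (fun y _ => hderiv y) hint.integrableOn hlim, sub_zero]
    _ ≤ ∫ y in Set.Iic x, (f y ^ 2 + f' y ^ 2) :=
        setIntegral_mono hint.integrableOn hsq.integrableOn fun y => by
          nlinarith [sq_nonneg (f y - f' y)]
    _ ≤ ∫ y, (f y ^ 2 + f' y ^ 2) :=
        setIntegral_le_integral hsq (.of_forall fun y => by positivity)
    _ = _ := integral_add hf₂.integrable_sq hf'₂.integrable_sq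

/-- Boundedness of `F i t` in `Lᵖ(ℝ)`, uniformly in the index `i` and the time `t`. A single field
is treated as a family indexed by `Unit`. -/
def UniformMemLp {ι : Type*} (F : ι → SmoothField) (p : ℝ≥0∞) : Prop :=
  ∃ K : ℝ≥0, ∀ i t, eLpNorm (F i t) p ≤ K

namespace UniformMemLp

variable {ι κ : Type*} {F G : ι → SmoothField} {p q r : ℝ≥0∞}

theorem memLp (hF : UniformMemLp F p) (i : ι) (t : ℝ) : MemLp (F i t) p :=
  let ⟨_, hK⟩ := hF
  ⟨((F i).continuous_slice t).aestronglyMeasurable, (hK i t).trans_lt ENNReal.coe_lt_top⟩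

theorem zero : UniformMemLp (fun _ : ι => 0) p :=
  ⟨0, fun _ _ => (eLpNorm_zero (α := ℝ) (ε := ℝ)).le⟩

theorem comp (hF : UniformMemLp F p) (φ : κ → ι) : UniformMemLp (fun k => F (φ k)) p :=
  let ⟨K, hK⟩ := hF
  ⟨K, fun k => hK (φ k)⟩

theorem add (hF : UniformMemLp F p) (hG : UniformMemLp G p) (hp : 1 ≤ p) :
    UniformMemLp (F + G) p := by
  obtain ⟨K, hK⟩ := hF
  obtain ⟨L, hL⟩ := hG
  refine ⟨K + L, fun i t => ?_⟩
  push_cast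
  exact (eLpNorm_add_le ((F i).continuous_slice t).aestronglyMeasurable
    ((G i).continuous_slice t).aestronglyMeasurable hp).trans (add_le_add (hK i t) (hL i t))

theorem const_smul (hF : UniformMemLp F p) (c : ℝ) : UniformMemLp (fun i => c • F i) p := by
  obtain ⟨K, hK⟩ := hF
  refine ⟨‖c‖₊ * K, fun i t => ?_⟩
  have hle : eLpNorm (c • F i t) p ≤ ‖c‖ₑ * eLpNorm (F i t) p := eLpNorm_const_smul_le
  push_cast
  exact hle.trans (mul_le_mul_right (hK i t) _)

theorem sub (hF : UniformMemLp F p) (hG : UniformMemLp G p) (hp : 1 ≤ p) :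
    UniformMemLp (F - G) p := by
  rw [sub_eq_add_neg, ← neg_one_smul ℝ]
  exact hF.add (hG.const_smul _) hp

theorem mul [ENNReal.HolderTriple p q r] (hF : UniformMemLp F p) (hG : UniformMemLp G q) :
    UniformMemLp (F * G) r := by
  obtain ⟨K, hK⟩ := hF
  obtain ⟨L, hL⟩ := hG
  refine ⟨K * L, fun i t => ?_⟩
  push_cast
  exact (eLpNorm_smul_le_mul_eLpNorm ((G i).continuous_slice t).aestronglyMeasurable
    ((F i).continuous_slice t).aestronglyMeasurable).trans (mul_le_mul' (hK i t) (hL i t))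

theorem shift (hF : UniformMemLp F p) (h : ι → ℝ) :
    UniformMemLp (fun i => shift (h i) (F i)) p :=
  let ⟨K, hK⟩ := hF
  ⟨K, fun i t => (eLpNorm_shift (h i) (F i) t p).trans_le (hK i t)⟩

theorem avg (hF : UniformMemLp F p) (h : ι → ℝ) (hp : 1 ≤ p) (hp' : p ≠ ⊤) :
    UniformMemLp (fun i => avg (h i) (F i)) p :=
  let ⟨K, hK⟩ := hF
  ⟨K, fun i t => (eLpNorm_avg_le (h i) (F i) t hp hp').trans (hK i t)⟩

theorem mid (hF : UniformMemLp F p) (h : ι → ℝ) (hp : 1 ≤ p) :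
    UniformMemLp (fun i => mid (h i) (F i)) p :=
  ((hF.shift h).add hF hp).const_smul (1 / 2)

theorem integral_sq_le (hF : UniformMemLp F 2) : ∃ K : ℝ, ∀ i t, ∫ x, F i t x ^ 2 ≤ K := by
  obtain ⟨K, hK⟩ := id hF
  refine ⟨K ^ 2, fun i t => ?_⟩
  have := hK i t
  rw [eLpNorm_two_eq_ofReal_sqrt (hF.memLp i t), ENNReal.ofReal_le_coe] at this
  exact (Real.sqrt_le_left K.2).1 this

theorem of_integral_sq_le (hF : ∀ i t, MemLp (F i t) 2) {C : ℝ}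
    (hC : ∀ i t, ∫ x, F i t x ^ 2 ≤ C) : UniformMemLp F 2 := by
  refine ⟨(√C).toNNReal, fun i t => ?_⟩
  rw [eLpNorm_two_eq_ofReal_sqrt (hF i t)]
  exact ENNReal.ofReal_le_ofReal (Real.sqrt_le_sqrt (hC i t))

theorem top_of_deriv (hF : UniformMemLp F 2) (hF' : UniformMemLp (fun i => dx (F i)) 2) :
    UniformMemLp F ⊤ := by
  obtain ⟨K, hK⟩ := hF.integral_sq_le
  obtain ⟨L, hL⟩ := hF'.integral_sq_le
  refine ⟨(√(K + L)).toNNReal, fun i t => ?_⟩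
  rw [eLpNorm_exponent_top]
  refine eLpNormEssSup_le_of_ae_bound (.of_forall fun x => Real.abs_le_sqrt ?_)
  exact (sq_le_integral_sq_add_integral_deriv_sq ((F i).hasDerivAt_dx t) (hF.memLp i t)
    (hF'.memLp i t) x).trans (add_le_add (hK i t) (hL i t))

end UniformMemLp

/-- Continuity of `(i, x) ↦ F i t x` and decay like `(1 + x²)⁻¹`, locally uniformly in the parameter
`i` but not in the time `t`. -/
structure LocallyUniformDecay {X : Type*} [TopologicalSpace X] (F : X → SmoothField) : Prop where
  continuous : ∀ t, Continuous fun y : X × ℝ => F y.1 t y.2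
  bound : ∀ t i₀, ∃ C, ∀ᶠ i in 𝓝 i₀, ∀ x, |F i t x| ≤ C * (1 + x ^ 2)⁻¹

namespace LocallyUniformDecay

variable {X Y : Type*} [TopologicalSpace X] [TopologicalSpace Y] {F G : X → SmoothField}

theorem comp (hF : LocallyUniformDecay F) {φ : Y → X} (hφ : Continuous φ) :
    LocallyUniformDecay fun y => F (φ y) where
  continuous t := (hF.continuous t).comp (hφ.prodMap continuous_id)
  bound t y₀ := (hF.bound t (φ y₀)).imp fun _ hC => hφ.continuousAt.eventually hC

theorem add (hF : LocallyUniformDecay F) (hG : LocallyUniformDecay G) :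
    LocallyUniformDecay (F + G) where
  continuous t := (hF.continuous t).add (hG.continuous t)
  bound t i₀ := by
    obtain ⟨C, hC⟩ := hF.bound t i₀
    obtain ⟨D, hD⟩ := hG.bound t i₀
    refine ⟨C + D, hC.and hD |>.mono fun i hi x => (abs_add_le _ _).trans ?_⟩
    rw [add_mul]
    exact add_le_add (hi.1 x) (hi.2 x)

theorem const_smul (hF : LocallyUniformDecay F) (c : ℝ) :
    LocallyUniformDecay (fun i => c • F i) where
  continuous t := (hF.continuous t).const_smul c
  bound t i₀ := by
    obtain ⟨C, hC⟩ := hF.bound t i₀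
    refine ⟨|c| * C, hC.mono fun i hi x => ?_⟩
    rw [smul_apply, abs_mul, mul_assoc]
    exact mul_le_mul_of_nonneg_left (hi x) (abs_nonneg c)

theorem sub (hF : LocallyUniformDecay F) (hG : LocallyUniformDecay G) :
    LocallyUniformDecay (F - G) := by
  rw [sub_eq_add_neg, ← neg_one_smul ℝ]
  exact hF.add (hG.const_smul _)

theorem mul (hF : LocallyUniformDecay F) (hG : LocallyUniformDecay G) :
    LocallyUniformDecay (F * G) where
  continuous t := (hF.continuous t).mul (hG.continuous t)
  bound t i₀ := by
    obtain ⟨C, hC⟩ := hF.bound t i₀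
    obtain ⟨D, hD⟩ := hG.bound t i₀
    refine ⟨C * D, hC.and hD |>.mono fun i hi x => ?_⟩
    have hw : (1 + x ^ 2)⁻¹ ≤ 1 := inv_le_one_of_one_le₀ (by nlinarith)
    have hD₀ : 0 ≤ D * (1 + x ^ 2)⁻¹ := (abs_nonneg _).trans (hi.2 x)
    have hC₀ : 0 ≤ C := nonneg_of_mul_nonneg_left ((abs_nonneg _).trans (hi.1 x)) (by positivity)
    calc |F i t x * G i t x| ≤ C * (1 + x ^ 2)⁻¹ * (D * (1 + x ^ 2)⁻¹) := by
          rw [abs_mul]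
          exact mul_le_mul (hi.1 x) (hi.2 x) (abs_nonneg _) ((abs_nonneg _).trans (hi.1 x))
      _ ≤ C * 1 * (D * (1 + x ^ 2)⁻¹) := by gcongr
      _ = C * D * (1 + x ^ 2)⁻¹ := by ring

theorem integrable (hF : LocallyUniformDecay F) (i : X) (t : ℝ) : Integrable (F i t) := by
  obtain ⟨C, hC⟩ := hF.bound t i
  exact (integrable_inv_one_add_sq.const_mul C).mono'
    ((F i).continuous_slice t).aestronglyMeasurable (.of_forall hC.self_of_nhds)

theorem continuous_integral [FirstCountableTopology X] (hF : LocallyUniformDecay F) (t : ℝ) :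
    Continuous fun i => ∫ x, F i t x := by
  refine continuous_iff_continuousAt.2 fun i₀ => ?_
  obtain ⟨C, hC⟩ := hF.bound t i₀
  exact continuousAt_of_dominated
    (.of_forall fun i => ((F i).continuous_slice t).aestronglyMeasurable)
    (hC.mono fun i hi => .of_forall hi) (integrable_inv_one_add_sq.const_mul C)
    (.of_forall fun x => ((hF.continuous t).comp (.prodMk_left x)).continuousAt)

theorem memLp_two (hF : LocallyUniformDecay F) (i : X) (t : ℝ) : MemLp (F i t) 2 := by
  rw [memLp_two_iff_integrable_sq ((F i).continuous_slice t).aestronglyMeasurable]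
  simpa [sq] using! (hF.mul hF).integrable i t

end LocallyUniformDecay

theorem inv_one_add_add_sq_le (x y : ℝ) :
    (1 + (x + y) ^ 2)⁻¹ ≤ 2 * (1 + y ^ 2) * (1 + x ^ 2)⁻¹ := by
  rw [← div_eq_mul_inv, inv_eq_one_div, div_le_div_iff₀ (by positivity) (by positivity)]
  nlinarith [sq_nonneg (x + 2 * y), sq_nonneg (y * (x + y))]

theorem abs_shift_le {f : SmoothField} {t C : ℝ} (hf : ∀ x, |f t x| ≤ C * (1 + x ^ 2)⁻¹)
    {h R : ℝ} (hR : |h| ≤ R) (x : ℝ) :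
    |f t (x + h)| ≤ C * (2 * (1 + R ^ 2)) * (1 + x ^ 2)⁻¹ := by
  have hC : 0 ≤ C := nonneg_of_mul_nonneg_left ((abs_nonneg _).trans (hf x)) (by positivity)
  calc |f t (x + h)| ≤ C * (2 * (1 + h ^ 2) * (1 + x ^ 2)⁻¹) :=
        (hf _).trans (mul_le_mul_of_nonneg_left (inv_one_add_add_sq_le x h) hC)
    _ ≤ C * (2 * (1 + R ^ 2) * (1 + x ^ 2)⁻¹) := by
        have : h ^ 2 ≤ R ^ 2 := sq_le_sq' (abs_le.1 hR).1 (abs_le.1 hR).2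
        gcongr
    _ = _ := by ring

theorem eventually_abs_le (h₀ : ℝ) : ∀ᶠ h in 𝓝 h₀, |h| ≤ |h₀| + 1 :=
  (continuous_abs.tendsto h₀).eventually (ge_mem_nhds (lt_add_one _))

namespace LocallyUniformDecay

variable {f : SmoothField}

theorem shift (hf : LocallyUniformDecay fun _ : Unit => f) :
    LocallyUniformDecay fun h : ℝ => shift h f where
  continuous t := (f.continuous_slice t).comp (by fun_prop)
  bound t h₀ := by
    obtain ⟨C, hC⟩ := hf.bound t ()
    exact ⟨_, (eventually_abs_le h₀).mono fun h hh => abs_shift_le hC.self_of_nhds hh⟩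

theorem mid (hf : LocallyUniformDecay fun _ : Unit => f) :
    LocallyUniformDecay fun h : ℝ => mid h f :=
  (hf.shift.add (hf.comp (φ := fun _ => ()) continuous_const)).const_smul (1 / 2)

theorem avg (hf : LocallyUniformDecay fun _ : Unit => f) :
    LocallyUniformDecay fun h : ℝ => avg h f where
  continuous t := intervalIntegral.continuous_parametric_intervalIntegral_of_continuous'
    (f := fun (y : ℝ × ℝ) s => f t (y.2 + y.1 * s)) ((f.continuous_slice t).comp (by fun_prop)) 0 1
  bound t h₀ := by
    obtain ⟨C, hC⟩ := hf.bound t ()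
    refine ⟨C * (2 * (1 + (|h₀| + 1) ^ 2)), (eventually_abs_le h₀).mono fun h hh x => ?_⟩
    have hle : ∀ s ∈ Set.uIoc (0 : ℝ) 1, ‖f t (x + h * s)‖ ≤
        C * (2 * (1 + (|h₀| + 1) ^ 2)) * (1 + x ^ 2)⁻¹ := fun s hs => by
      rw [Set.uIoc_of_le zero_le_one] at hs
      refine abs_shift_le hC.self_of_nhds ?_ x
      rw [abs_mul, abs_of_pos hs.1]
      exact (mul_le_of_le_one_right (abs_nonneg h) hs.2).trans hh
    simpa [avg_apply] using intervalIntegral.norm_integral_le_of_norm_le_const hle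

end LocallyUniformDecay

/-- The regularity of the components of a solution, for a family of fields: boundedness in `H¹`
uniformly in the index and the time, and decay of `F i` and `∂ₓ(F i)` at each time. -/
structure IsRegular {X : Type*} [TopologicalSpace X] (F : X → SmoothField) : Prop where
  memLp : UniformMemLp F 2
  memLp_dx : UniformMemLp (fun i => dx (F i)) 2
  decay : LocallyUniformDecay F
  decay_dx : LocallyUniformDecay fun i => dx (F i)

namespace IsRegular

variable {X Y : Type*} [TopologicalSpace X] [TopologicalSpace Y] {F G : X → SmoothField}
  {f : SmoothField}

theorem memLp_top (hF : IsRegular F) : UniformMemLp F ⊤ :=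
  hF.memLp.top_of_deriv hF.memLp_dx

theorem comp (hF : IsRegular F) {φ : Y → X} (hφ : Continuous φ) :
    IsRegular fun y => F (φ y) where
  memLp := hF.memLp.comp φ
  memLp_dx := hF.memLp_dx.comp φ
  decay := hF.decay.comp hφ
  decay_dx := hF.decay_dx.comp hφ

theorem add (hF : IsRegular F) (hG : IsRegular G) : IsRegular (F + G) where
  memLp := hF.memLp.add hG.memLp one_le_two
  memLp_dx := by
    simp only [Pi.add_apply, map_add]
    exact hF.memLp_dx.add hG.memLp_dx one_le_two
  decay := hF.decay.add hG.decay
  decay_dx := by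
    simp only [Pi.add_apply, map_add]
    exact hF.decay_dx.add hG.decay_dx

theorem const_smul (hF : IsRegular F) (c : ℝ) : IsRegular fun i => c • F i where
  memLp := hF.memLp.const_smul c
  memLp_dx := by
    simp only [Derivation.map_smul]
    exact hF.memLp_dx.const_smul c
  decay := hF.decay.const_smul c
  decay_dx := by
    simp only [Derivation.map_smul]
    exact hF.decay_dx.const_smul c

theorem sub (hF : IsRegular F) (hG : IsRegular G) : IsRegular (F - G) := by
  rw [sub_eq_add_neg, ← neg_one_smul ℝ]
  exact hF.add (hG.const_smul _)

theorem mul (hF : IsRegular F) (hG : IsRegular G) : IsRegular (F * G) where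
  memLp := hF.memLp.mul hG.memLp_top
  memLp_dx := by
    simp only [Pi.mul_apply, Derivation.leibniz, smul_eq_mul]
    exact (hF.memLp_top.mul hG.memLp_dx).add (hG.memLp_top.mul hF.memLp_dx) one_le_two
  decay := hF.decay.mul hG.decay
  decay_dx := by
    simp only [Pi.mul_apply, Derivation.leibniz, smul_eq_mul]
    exact (hF.decay.mul hG.decay_dx).add (hG.decay.mul hF.decay_dx)

theorem avg (hf : IsRegular fun _ : Unit => f) : IsRegular fun h : ℝ => avg h f where
  memLp := (hf.memLp.comp fun _ => ()).avg id one_le_two ENNReal.ofNat_ne_top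
  memLp_dx := by
    simp only [dir_avg]
    exact (hf.memLp_dx.comp fun _ => ()).avg id one_le_two ENNReal.ofNat_ne_top
  decay := hf.decay.avg
  decay_dx := by
    simp only [dir_avg]
    exact hf.decay_dx.avg

theorem mid (hf : IsRegular fun _ : Unit => f) : IsRegular fun h : ℝ => mid h f where
  memLp := (hf.memLp.comp fun _ => ()).mid id one_le_two
  memLp_dx := by
    simp only [dir_mid]
    exact (hf.memLp_dx.comp fun _ => ()).mid id one_le_two
  decay := hf.decay.mid
  decay_dx := by
    simp only [dir_mid]
    exact hf.decay_dx.mid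

theorem memLp_dx_dx_avg (hf : IsRegular fun _ : Unit => f) {h : ℝ} (hh : h ≠ 0) :
    UniformMemLp (fun _ : Unit => dx (dx (SmoothField.avg h f))) 2 := by
  have : dx (dx (SmoothField.avg h f)) = h⁻¹ • (SmoothField.shift h (dx f) - dx f) := by
    rw [dir_avg, ← smul_dx_avg, inv_smul_smul₀ hh]
  rw [this]
  exact ((hf.memLp_dx.shift fun _ => h).sub hf.memLp_dx one_le_two).const_smul _

end IsRegular

/-! ### Balance laws -/

theorem UniformMemLp.integrable {ι : Type*} {F : ι → SmoothField} (hF : UniformMemLp F 1) (i : ι)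
    (t : ℝ) : Integrable (F i t) :=
  memLp_one_iff_integrable.1 (hF.memLp i t)

theorem UniformMemLp.integral_abs_le {ι : Type*} {F : ι → SmoothField} (hF : UniformMemLp F 1) :
    ∃ K, ∀ i t, ∫ x, |F i t x| ≤ K := by
  obtain ⟨K, hK⟩ := hF
  refine ⟨K, fun i t => ?_⟩
  have := ENNReal.toReal_mono ENNReal.coe_ne_top (hK i t)
  rwa [eLpNorm_one_eq_lintegral_enorm, ← integral_norm_eq_lintegral_enorm
    ((F i).continuous_slice t).aestronglyMeasurable] at this

/-- The integral of `g` against the cutoff `φ(η ·)`. -/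
noncomputable def cutoffIntegral (φ : ℝ → ℝ) (η : ℝ) (g : ℝ → ℝ) : ℝ := ∫ x, φ (η * x) * g x

section Cutoff

variable {φ g : ℝ → ℝ}

theorem abs_cutoffIntegral_le {M : ℝ} (hM : ∀ x, ‖φ x‖ ≤ M) (η : ℝ) (hg : Integrable g) :
    |cutoffIntegral φ η g| ≤ M * ∫ x, |g x| := by
  rw [← integral_const_mul, cutoffIntegral, ← Real.norm_eq_abs]
  refine norm_integral_le_of_norm_le (hg.abs.const_mul M) (.of_forall fun x => ?_)
  rw [norm_mul]
  exact mul_le_mul_of_nonneg_right (hM _) (abs_nonneg _)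

theorem tendsto_cutoffIntegral (hφ : Continuous φ) {M : ℝ} (hM : ∀ x, ‖φ x‖ ≤ M)
    (hg : Integrable g) :
    Tendsto (fun η => cutoffIntegral φ η g) (𝓝 0) (𝓝 (φ 0 * ∫ x, g x)) := by
  rw [← integral_const_mul]
  refine tendsto_integral_filter_of_dominated_convergence (fun x => M * |g x|)
    (.of_forall fun η => ?_) (.of_forall fun η => .of_forall fun x => ?_) (hg.abs.const_mul M)
    (.of_forall fun x => ?_)
  · exact (hφ.comp (by fun_prop)).aestronglyMeasurable.mul hg.aestronglyMeasurable
  · rw [norm_mul]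
    exact mul_le_mul_of_nonneg_right (hM _) (abs_nonneg _)
  · have hcont : Continuous fun η => φ (η * x) * g x := by fun_prop
    simpa using hcont.tendsto 0

variable {η : ℝ}

theorem hasCompactSupport_comp_mul (hφ : HasCompactSupport φ) (hη : η ≠ 0) :
    HasCompactSupport fun x => φ (η * x) :=
  hφ.comp_homeomorph (Homeomorph.mulLeft₀ η hη)

theorem cutoffIntegral_dx (hφ : ContDiff ℝ ∞ φ) (hφc : HasCompactSupport φ) (hη : η ≠ 0)
    (f : SmoothField) (t : ℝ) :
    cutoffIntegral φ η (dx f t) = -(η * cutoffIntegral (deriv φ) η (f t)) := by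
  have hderiv (x : ℝ) : HasDerivAt (fun x => φ (η * x)) (η * deriv φ (η * x)) x := by
    have := (hφ.differentiable (by simp) (η * x)).hasDerivAt.comp x
      ((hasDerivAt_id x).const_mul η)
    simpa [mul_comm] using! this
  have hφ' : Continuous (deriv φ) := hφ.continuous_deriv (by simp)
  have hint {χ : ℝ → ℝ} (hχ : Continuous χ) (hχc : HasCompactSupport χ) (g : SmoothField) :
      Integrable fun x => χ (η * x) * g t x :=
    ((hχ.comp (by fun_prop)).mul (g.continuous_slice t)).integrable_of_hasCompactSupport
      (hasCompactSupport_comp_mul hχc hη).mul_right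
  have hparts := integral_mul_deriv_eq_deriv_mul_of_integrable (fun x _ => hderiv x)
    (fun x _ => f.hasDerivAt_dx t x) (hint hφ.continuous hφc (dx f))
    (by simpa [Pi.mul_def, mul_assoc] using! (hint hφ' hφc.deriv f).const_mul η)
    (hint hφ.continuous hφc f)
  simpa only [cutoffIntegral, mul_assoc, integral_const_mul] using hparts

theorem integrable_cutoff_mul (hφ : Continuous φ) (hφc : HasCompactSupport φ) (f : SmoothField)
    (a b : ℝ) :
    Integrable (Function.uncurry fun t x => φ x * f t x)
      ((volume.restrict (Set.uIoc a b)).prod volume) := by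
  have hcont : Continuous (Function.uncurry fun t x => φ x * f t x) :=
    (hφ.comp continuous_snd).mul f.continuous
  nth_rw 2 [← Measure.restrict_univ (μ := (volume : Measure ℝ))]
  rw [Measure.prod_restrict]
  refine IntegrableOn.of_forall_sdiff_eq_zero (s := Set.uIcc a b ×ˢ tsupport φ)
    (hcont.continuousOn.integrableOn_compact (isCompact_uIcc.prod hφc)) ?_ fun y hy => ?_
  · exact measurableSet_uIoc.prod .univ
  · have : y.2 ∉ tsupport φ := fun h => hy.2 ⟨Set.uIoc_subset_uIcc hy.1.1, h⟩
    simp [Function.uncurry, image_eq_zero_of_notMem_tsupport this]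

theorem cutoffIntegral_sub_eq_integral_dt (hφ : Continuous φ) (hφc : HasCompactSupport φ)
    (hη : η ≠ 0) (e : SmoothField) (a b : ℝ) :
    cutoffIntegral φ η (e b) - cutoffIntegral φ η (e a) =
      ∫ t in a..b, cutoffIntegral φ η (dt e t) := by
  have hφη : Continuous fun x => φ (η * x) := by fun_prop
  have hint (t : ℝ) : Integrable fun x => φ (η * x) * e t x :=
    (hφη.mul (e.continuous_slice t)).integrable_of_hasCompactSupport
      (hasCompactSupport_comp_mul hφc hη).mul_right
  unfold cutoffIntegral
  rw [intervalIntegral_integral_swap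
    (integrable_cutoff_mul hφη (hasCompactSupport_comp_mul hφc hη) (dt e) a b),
    ← integral_sub (hint b) (hint a)]
  refine integral_congr_ae (.of_forall fun x => ?_)
  have hdt : Continuous fun t => dt e t x := (dt e).continuous.comp (.prodMk_left x)
  simp only
  rw [intervalIntegral.integral_const_mul, intervalIntegral.integral_eq_sub_of_hasDerivAt
    (fun t _ => e.hasDerivAt_dt t x) (hdt.intervalIntegrable a b), mul_sub]

theorem stronglyMeasurable_cutoffIntegral (hφ : Continuous φ) (f : SmoothField) :
    StronglyMeasurable fun t => cutoffIntegral φ η (f t) :=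
  StronglyMeasurable.integral_prod_right (f := fun t x => φ (η * x) * f t x)
    ((hφ.comp (by fun_prop)).mul f.continuous).stronglyMeasurable

theorem cutoffIntegral_dt_of_balance (hφ : ContDiff ℝ ∞ φ) (hφc : HasCompactSupport φ)
    {e s F c : SmoothField} (h : dt e = s + dx F + dx (dx (dx c))) (hη : η ≠ 0) (t : ℝ) :
    cutoffIntegral φ η (dt e t) = cutoffIntegral φ η (s t) -
      η * cutoffIntegral (deriv φ) η (F t) - η ^ 3 * cutoffIntegral (deriv^[3] φ) η (c t) := by
  have hint (f : SmoothField) : Integrable fun x => φ (η * x) * f t x :=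
    ((hφ.continuous.comp (by fun_prop)).mul (f.continuous_slice t)).integrable_of_hasCompactSupport
      (hasCompactSupport_comp_mul hφc hη).mul_right
  have hadd (f g : SmoothField) :
      cutoffIntegral φ η ((f + g) t) = cutoffIntegral φ η (f t) + cutoffIntegral φ η (g t) := by
    simp only [cutoffIntegral, add_apply, mul_add]
    exact integral_add (hint f) (hint g)
  have hφ' : ContDiff ℝ ∞ (deriv φ) := (contDiff_infty_iff_deriv.1 hφ).2
  have hφ'' : ContDiff ℝ ∞ (deriv (deriv φ)) := (contDiff_infty_iff_deriv.1 hφ').2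
  rw [h, hadd, hadd, cutoffIntegral_dx hφ hφc hη, cutoffIntegral_dx hφ hφc hη,
    cutoffIntegral_dx hφ' hφc.deriv hη, cutoffIntegral_dx hφ'' hφc.deriv.deriv hη]
  simp only [Function.iterate_succ, Function.iterate_zero, Function.comp_apply, id_eq]
  ring

theorem exists_abs_cutoffIntegral_le (hφ : Continuous φ) (hφc : HasCompactSupport φ)
    {f : SmoothField} (hf : UniformMemLp (fun _ : Unit => f) 1) :
    ∃ K, ∀ η t, |cutoffIntegral φ η (f t)| ≤ K := by
  obtain ⟨M, hM⟩ := hφc.exists_bound_of_continuous hφ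
  obtain ⟨K, hK⟩ := hf.integral_abs_le
  exact ⟨M * K, fun η t => (abs_cutoffIntegral_le hM η (hf.integrable () t)).trans
    (mul_le_mul_of_nonneg_left (hK () t) ((norm_nonneg _).trans (hM 0)))⟩

end Cutoff

theorem integral_dx_eq_zero {f : SmoothField} {t : ℝ} (hf : Integrable (f t))
    (hf' : Integrable (dx f t)) : ∫ x, dx f t x = 0 :=
  integral_eq_zero_of_hasDerivAt_of_integrable (f.hasDerivAt_dx t) hf' hf

theorem eventually_ne_abs_le_one : ∀ᶠ η in 𝓝[≠] (0 : ℝ), η ≠ 0 ∧ |η| ≤ 1 :=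
  eventually_mem_nhdsWithin.and <| eventually_nhdsWithin_of_eventually_nhds <|
    (eventually_abs_le 0).mono fun _ h => by simpa using h

/-- The density `e` satisfies a balance law `∂ₜe = s + ∂ₓF + ∂ₓ³c` with source `s`, where
`e`, `s`, `F` and `c` are bounded in `L¹` uniformly in time. -/
structure IsBalanced (e s : SmoothField) : Prop where
  density : UniformMemLp (fun _ : Unit => e) 1
  source : UniformMemLp (fun _ : Unit => s) 1
  flux : ∃ F c : SmoothField, UniformMemLp (fun _ : Unit => F) 1 ∧
    UniformMemLp (fun _ : Unit => c) 1 ∧ dt e = s + dx F + dx (dx (dx c))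

namespace IsBalanced

variable {e e' s s' : SmoothField}

theorem add (h : IsBalanced e s) (h' : IsBalanced e' s') : IsBalanced (e + e') (s + s') where
  density := h.density.add h'.density le_rfl
  source := h.source.add h'.source le_rfl
  flux := by
    obtain ⟨F, c, hF, hc, he⟩ := h.flux
    obtain ⟨F', c', hF', hc', he'⟩ := h'.flux
    refine ⟨F + F', c + c', hF.add hF' le_rfl, hc.add hc' le_rfl, ?_⟩
    simp only [map_add, he, he']
    abel

theorem const_smul (h : IsBalanced e s) (a : ℝ) : IsBalanced (a • e) (a • s) where
  density := h.density.const_smul a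
  source := h.source.const_smul a
  flux := by
    obtain ⟨F, c, hF, hc, he⟩ := h.flux
    refine ⟨a • F, a • c, hF.const_smul a, hc.const_smul a, ?_⟩
    simp only [Derivation.map_smul, he, smul_add]

variable {φ : ℝ → ℝ}

theorem exists_abs_cutoffIntegral_dt_sub_le (hφ : ContDiff ℝ ∞ φ) (hφc : HasCompactSupport φ)
    (h : IsBalanced e s) :
    ∃ K, ∀ η, η ≠ 0 → |η| ≤ 1 → ∀ t,
      |cutoffIntegral φ η (dt e t) - cutoffIntegral φ η (s t)| ≤ K * |η| := by
  obtain ⟨F, c, hF, hc, he⟩ := h.flux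
  have hφ₃ : Continuous (deriv^[3] φ) := (hφ.iterate_deriv 3).continuous
  obtain ⟨K, hK⟩ := exists_abs_cutoffIntegral_le (hφ.continuous_deriv (by simp)) hφc.deriv hF
  obtain ⟨L, hL⟩ := exists_abs_cutoffIntegral_le hφ₃ hφc.deriv.deriv.deriv hc
  refine ⟨K + L, fun η hη hη₁ t => ?_⟩
  rw [cutoffIntegral_dt_of_balance hφ hφc he hη, sub_sub (cutoffIntegral φ η _),
    sub_sub_cancel_left, abs_neg, add_mul]
  refine (abs_add_le _ _).trans (add_le_add ?_ ?_)
  · rw [abs_mul, mul_comm]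
    exact mul_le_mul_of_nonneg_right (hK η t) (abs_nonneg η)
  · rw [abs_mul, mul_comm, abs_pow]
    exact mul_le_mul (hL η t) (pow_le_of_le_one (abs_nonneg η) hη₁ three_ne_zero) (by positivity)
      ((abs_nonneg _).trans (hL η t))

theorem exists_abs_cutoffIntegral_dt_le (hφ : ContDiff ℝ ∞ φ) (hφc : HasCompactSupport φ)
    (h : IsBalanced e s) :
    ∃ K, ∀ η, η ≠ 0 → |η| ≤ 1 → ∀ t, |cutoffIntegral φ η (dt e t)| ≤ K := by
  obtain ⟨K, hK⟩ := h.exists_abs_cutoffIntegral_dt_sub_le hφ hφc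
  obtain ⟨L, hL⟩ := exists_abs_cutoffIntegral_le hφ.continuous hφc h.source
  refine ⟨|K| + L, fun η hη hη₁ t => ?_⟩
  have hflux : K * |η| ≤ |K| :=
    (mul_le_mul_of_nonneg_right (le_abs_self K) (abs_nonneg η)).trans
      (mul_le_of_le_one_right (abs_nonneg K) hη₁)
  rw [← sub_add_cancel (cutoffIntegral φ η (dt e t)) (cutoffIntegral φ η (s t))]
  exact (abs_add_le _ _).trans (add_le_add ((hK η hη hη₁ t).trans hflux) (hL η t))

theorem tendsto_cutoffIntegral_dt (hφ : ContDiff ℝ ∞ φ) (hφc : HasCompactSupport φ)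
    (h : IsBalanced e s) (t : ℝ) :
    Tendsto (fun η => cutoffIntegral φ η (dt e t)) (𝓝[≠] 0) (𝓝 (φ 0 * ∫ x, s t x)) := by
  obtain ⟨M, hM⟩ := hφc.exists_bound_of_continuous hφ.continuous
  obtain ⟨K, hK⟩ := h.exists_abs_cutoffIntegral_dt_sub_le hφ hφc
  have hsource := (tendsto_cutoffIntegral hφ.continuous hM (h.source.integrable () t)).mono_left
    (nhdsWithin_le_nhds (s := {0}ᶜ))
  have hflux : Tendsto (fun η => cutoffIntegral φ η (dt e t) - cutoffIntegral φ η (s t))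
      (𝓝[≠] 0) (𝓝 0) := by
    have hlim : Tendsto (fun η : ℝ => K * |η|) (𝓝[≠] 0) (𝓝 0) :=
      tendsto_nhdsWithin_of_tendsto_nhds (Continuous.tendsto' (by fun_prop) _ _ (by simp))
    exact squeeze_zero_norm' (eventually_ne_abs_le_one.mono fun η hη => hK η hη.1 hη.2 t) hlim
  simpa using hsource.add hflux

theorem integral_sub_eq (h : IsBalanced e s) (a b : ℝ) :
    (∫ x, e b x) - ∫ x, e a x = ∫ t in a..b, ∫ x, s t x := by
  let φ : ContDiffBump (0 : ℝ) := default
  have hφ : ContDiff ℝ ∞ φ := φ.contDiff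
  have hφc : HasCompactSupport φ := φ.hasCompactSupport
  have hφ₀ : φ 0 = 1 := φ.one_of_mem_closedBall (Metric.mem_closedBall_self φ.rIn_pos.le)
  obtain ⟨M, hM⟩ := hφc.exists_bound_of_continuous hφ.continuous
  obtain ⟨K, hK⟩ := h.exists_abs_cutoffIntegral_dt_le hφ hφc
  have hdensity (t : ℝ) : Tendsto (fun η => cutoffIntegral φ η (e t)) (𝓝[≠] 0) (𝓝 (∫ x, e t x)) :=
    by simpa [hφ₀] using (tendsto_cutoffIntegral hφ.continuous hM
      (h.density.integrable () t)).mono_left (nhdsWithin_le_nhds (s := {0}ᶜ))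
  have hsource := intervalIntegral.tendsto_integral_filter_of_dominated_convergence
    (a := a) (b := b) (μ := volume) (fun _ => K)
    (.of_forall fun η => (stronglyMeasurable_cutoffIntegral hφ.continuous _).aestronglyMeasurable)
    (eventually_ne_abs_le_one.mono fun η hη => .of_forall fun t _ => hK η hη.1 hη.2 t)
    intervalIntegrable_const
    (.of_forall fun t _ => h.tendsto_cutoffIntegral_dt hφ hφc t)
  refine tendsto_nhds_unique ((hdensity b).sub (hdensity a)) ?_
  simp only [hφ₀, one_mul] at hsource
  refine hsource.congr' (eventually_mem_nhdsWithin.mono fun η hη => ?_)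
  exact (cutoffIntegral_sub_eq_integral_dt hφ.continuous hφc hη e a b).symm

end IsBalanced

theorem integral_eq_of_isBalanced_family {e s : ℝ → SmoothField}
    (h : ∀ h ≠ 0, IsBalanced (e h) (s h)) (hs : UniformMemLp s 1)
    (he_decay : LocallyUniformDecay e) (hs_decay : LocallyUniformDecay s)
    (hs₀ : ∀ t, ∫ x, s 0 t x = 0) (a b : ℝ) : ∫ x, e 0 b x = ∫ x, e 0 a x := by
  obtain ⟨K, hK⟩ := hs.integral_abs_le
  have hdensity (t : ℝ) : Tendsto (fun h => ∫ x, e h t x) (𝓝[≠] 0) (𝓝 (∫ x, e 0 t x)) :=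
    ((he_decay.continuous_integral t).tendsto 0).mono_left nhdsWithin_le_nhds
  have hsource : Tendsto (fun h => ∫ t in a..b, ∫ x, s h t x) (𝓝 0)
      (𝓝 (∫ t in a..b, ∫ x, s 0 t x)) :=
    intervalIntegral.tendsto_integral_filter_of_dominated_convergence (fun _ => K)
      (.of_forall fun h =>
        (s h).continuous.stronglyMeasurable.integral_prod_right.aestronglyMeasurable)
      (.of_forall fun h => .of_forall fun t _ => (norm_integral_le_integral_norm _).trans (hK h t))
      intervalIntegrable_const
      (.of_forall fun t _ => (hs_decay.continuous_integral t).tendsto 0)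
  have hlim : Tendsto (fun h => (∫ x, e h b x) - ∫ x, e h a x) (𝓝[≠] 0) (𝓝 0) := by
    simp only [hs₀, intervalIntegral.integral_zero] at hsource
    refine (hsource.mono_left nhdsWithin_le_nhds).congr' ?_
    exact eventually_mem_nhdsWithin.mono fun η hη => ((h η hη).integral_sub_eq a b).symm
  exact sub_eq_zero.1 (tendsto_nhds_unique ((hdensity b).sub (hdensity a)) hlim)

/-! ### Energies of the averaged equations -/

section KdV

variable (γ : ℝ) (z m r k a b : SmoothField)

/-- The KdV energy density `½(∂ₓz)² - ⅙ m z² + γ z r`, to be used with `z` and `r` the averages of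
`v` and `|u|²` over `[x, x + h]` and `m` the average of `v` over the two endpoints. Having `m z²`
in place of `z³` matches the nonlinearity `m ∂ₓz` of the averaged equation. -/
noncomputable def kdvEnergy : SmoothField :=
  (1 / 2 : ℝ) • (dx z * dx z) - (1 / 6 : ℝ) • (m * (z * z)) + γ • (z * r)

/-- The part of `∂ₜ(kdvEnergy γ z m r)` that is not a divergence. Here `k` is the average of the
current of `|u|²`, and `a`, `b` are the averages of `∂ₓ(γ|u|² - v²/2)` over `[x, x + h]` and over
its endpoints. -/
noncomputable def kdvSource : SmoothField :=
  γ • (r * a + k * dx z) - (1 / 6 : ℝ) • (z * (z * b + (2 : ℝ) • (m * a)))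

/-- The flux of `kdvEnergy` that enters its balance law through a first derivative. -/
noncomputable def kdvFlux : SmoothField :=
  (3 / 2 : ℝ) • (dx (dx z) * dx (dx z)) - dx z * (m * dx z + dx m * z) +
    γ • (dx z * dx r - r * dx (dx z) - k * z)

/-- The flux of `kdvEnergy` that enters its balance law through a third derivative. -/
noncomputable def kdvDispersiveFlux : SmoothField :=
  (1 / 6 : ℝ) • (m * (z * z)) - (1 / 2 : ℝ) • (dx z * dx z)

variable {γ z m r k a b}

theorem dt_kdvEnergy (hz : dt z = a - dx (dx (dx z))) (hm : dt m = b - dx (dx (dx m)))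
    (hr : dt r = -dx k) (ha : a = γ • dx r - m * dx z) :
    dt (kdvEnergy γ z m r) = kdvSource γ z m r k a b + dx (kdvFlux γ z m r k) +
      dx (dx (dx (kdvDispersiveFlux z m))) := by
  have hzx : dt (dx z) = dx a - dx (dx (dx (dx z))) := by rw [dir_comm, hz, map_sub]
  simp only [kdvEnergy, kdvSource, kdvFlux, kdvDispersiveFlux, map_add, map_sub,
    Derivation.map_smul, Derivation.leibniz, smul_eq_mul, hz, hm, hr, hzx, ha]
  ext t x
  simp only [add_apply, sub_apply, smul_apply, mul_apply, neg_apply]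
  ring

section Bounds

variable {X : Type*} [TopologicalSpace X] {z m r k a b : X → SmoothField}

theorem uniformMemLp_kdvEnergy (hz : IsRegular z) (hm : IsRegular m) (hr : IsRegular r) :
    UniformMemLp (fun i => kdvEnergy γ (z i) (m i) (r i)) 1 :=
  (((hz.memLp_dx.mul hz.memLp_dx).const_smul _).sub
    ((hm.memLp.mul (hz.memLp.mul hz.memLp_top (r := 2))).const_smul _) le_rfl).add
    ((hz.memLp.mul hr.memLp).const_smul _) le_rfl

theorem decay_kdvEnergy (hz : IsRegular z) (hm : IsRegular m) (hr : IsRegular r) :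
    LocallyUniformDecay fun i => kdvEnergy γ (z i) (m i) (r i) :=
  (((hz.decay_dx.mul hz.decay_dx).const_smul _).sub
    ((hm.decay.mul (hz.decay.mul hz.decay)).const_smul _)).add
    ((hz.decay.mul hr.decay).const_smul _)

theorem uniformMemLp_kdvSource (hz : IsRegular z) (hm : IsRegular m) (hr : IsRegular r)
    (hk : UniformMemLp k 2) (ha : UniformMemLp a 2) (hb : UniformMemLp b 2) :
    UniformMemLp (fun i => kdvSource γ (z i) (m i) (r i) (k i) (a i) (b i)) 1 :=
  (((hr.memLp.mul ha).add (hk.mul hz.memLp_dx) le_rfl).const_smul _).sub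
    ((hz.memLp.mul ((hz.memLp_top.mul hb (r := 2)).add
      ((hm.memLp_top.mul ha).const_smul _) one_le_two)).const_smul _) le_rfl

theorem decay_kdvSource (hz : IsRegular z) (hm : IsRegular m) (hr : IsRegular r)
    (hk : LocallyUniformDecay k) (ha : LocallyUniformDecay a) (hb : LocallyUniformDecay b) :
    LocallyUniformDecay fun i => kdvSource γ (z i) (m i) (r i) (k i) (a i) (b i) :=
  (((hr.decay.mul ha).add (hk.mul hz.decay_dx)).const_smul _).sub
    ((hz.decay.mul ((hz.decay.mul hb).add ((hm.decay.mul ha).const_smul _))).const_smul _)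

theorem uniformMemLp_kdvFlux (hz : IsRegular z) (hzz : UniformMemLp (fun i => dx (dx (z i))) 2)
    (hm : IsRegular m) (hr : IsRegular r) (hk : UniformMemLp k 2) :
    UniformMemLp (fun i => kdvFlux γ (z i) (m i) (r i) (k i)) 1 :=
  (((hzz.mul hzz).const_smul _).sub (hz.memLp_dx.mul ((hm.memLp_top.mul hz.memLp_dx).add
      (hm.memLp_dx.mul hz.memLp_top) one_le_two)) le_rfl).add
    ((((hz.memLp_dx.mul hr.memLp_dx).sub (hr.memLp.mul hzz) le_rfl).sub
      (hk.mul hz.memLp) le_rfl).const_smul _) le_rfl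

theorem uniformMemLp_kdvDispersiveFlux (hz : IsRegular z) (hm : IsRegular m) :
    UniformMemLp (fun i => kdvDispersiveFlux (z i) (m i)) 1 :=
  ((hm.memLp.mul (hz.memLp.mul hz.memLp_top (r := 2))).const_smul _).sub
    ((hz.memLp_dx.mul hz.memLp_dx).const_smul _) le_rfl

end Bounds

variable (γ) in
/-- The quantity `γρ - v²/2`, whose space derivative drives the linear part of the KdV equation. -/
noncomputable def kdvForce (v ρ : SmoothField) : SmoothField := γ • ρ - (1 / 2 : ℝ) • (v * v)

variable {h : ℝ} {v ρ J : SmoothField}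

theorem avg_dx_kdvForce (hh : h ≠ 0) :
    avg h (dx (kdvForce γ v ρ)) = γ • dx (avg h ρ) - mid h v * dx (avg h v) := by
  have hforce : dx (kdvForce γ v ρ) = γ • dx ρ - v * dx v := by
    simp only [kdvForce, map_sub, Derivation.map_smul, Derivation.leibniz, smul_eq_mul]
    rw [← two_smul ℝ, smul_smul]
    norm_num
  rw [hforce, map_sub, map_smul, avg_mul_dx_self h v hh, dir_avg h ρ]

theorem isRegular_kdvForce (hv : IsRegular fun _ : Unit => v) (hρ : IsRegular fun _ : Unit => ρ) :
    IsRegular fun _ : Unit => kdvForce γ v ρ :=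
  (hρ.const_smul γ).sub ((hv.mul hv).const_smul _)

theorem isBalanced_kdvEnergy (hh : h ≠ 0) (hv : IsRegular fun _ : Unit => v)
    (hρ : IsRegular fun _ : Unit => ρ) (hJ : UniformMemLp (fun _ : Unit => J) 2)
    (hv_t : dt v = dx (kdvForce γ v ρ) - dx (dx (dx v))) (hρ_t : dt ρ = -dx J) :
    IsBalanced (kdvEnergy γ (avg h v) (mid h v) (avg h ρ))
      (kdvSource γ (avg h v) (mid h v) (avg h ρ) (avg h J) (avg h (dx (kdvForce γ v ρ)))
        (mid h (dx (kdvForce γ v ρ)))) := by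
  have hz := hv.avg.comp (continuous_const (y := h) (X := Unit))
  have hm := hv.mid.comp (continuous_const (y := h) (X := Unit))
  have hr := hρ.avg.comp (continuous_const (y := h) (X := Unit))
  have hG := isRegular_kdvForce (γ := γ) hv hρ
  have hk := hJ.avg (fun _ => h) one_le_two ENNReal.ofNat_ne_top
  refine ⟨uniformMemLp_kdvEnergy hz hm hr, uniformMemLp_kdvSource hz hm hr hk
    (hG.memLp_dx.avg (fun _ => h) one_le_two ENNReal.ofNat_ne_top)
    (hG.memLp_dx.mid (fun _ => h) one_le_two), _, _,
    uniformMemLp_kdvFlux hz (hv.memLp_dx_dx_avg hh) hm hr hk,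
    uniformMemLp_kdvDispersiveFlux hz hm, dt_kdvEnergy ?_ ?_ ?_ (avg_dx_kdvForce hh)⟩
  · simp only [dir_avg, hv_t, map_sub]
  · simp only [dir_mid, hv_t, map_sub]
  · simp only [dir_avg, hρ_t, map_neg]

end KdV

section Schrödinger

variable (p q a b : SmoothField)

/-- The kinetic energy density `|∂ₓu|²` of `u = p + iq`. -/
noncomputable def nlsEnergy : SmoothField := dx p * dx p + dx q * dx q

/-- The source of `nlsEnergy p q` when `∂ₜp = a - ∂ₓ²q` and `∂ₜq = ∂ₓ²p - b`. -/
noncomputable def nlsSource : SmoothField := (2 : ℝ) • (dx p * dx a - dx q * dx b)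

variable {p q a b}

theorem dt_nlsEnergy (hp : dt p = a - dx (dx q)) (hq : dt q = dx (dx p) - b) :
    dt (nlsEnergy p q) = nlsSource p q a b +
      dx ((2 : ℝ) • (dx q * dx (dx p) - dx p * dx (dx q))) := by
  have hpx : dt (dx p) = dx a - dx (dx (dx q)) := by rw [dir_comm, hp, map_sub]
  have hqx : dt (dx q) = dx (dx (dx p)) - dx b := by rw [dir_comm, hq, map_sub]
  simp only [nlsEnergy, nlsSource, map_add, map_sub, Derivation.map_smul, Derivation.leibniz,
    smul_eq_mul, hpx, hqx]
  ext t x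
  simp only [add_apply, sub_apply, smul_apply, mul_apply]
  ring

section Bounds

variable {X : Type*} [TopologicalSpace X] {p q a b : X → SmoothField}

theorem uniformMemLp_nlsEnergy (hp : IsRegular p) (hq : IsRegular q) :
    UniformMemLp (fun i => nlsEnergy (p i) (q i)) 1 :=
  (hp.memLp_dx.mul hp.memLp_dx).add (hq.memLp_dx.mul hq.memLp_dx) le_rfl

theorem decay_nlsEnergy (hp : IsRegular p) (hq : IsRegular q) :
    LocallyUniformDecay fun i => nlsEnergy (p i) (q i) :=
  (hp.decay_dx.mul hp.decay_dx).add (hq.decay_dx.mul hq.decay_dx)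

theorem uniformMemLp_nlsSource (hp : IsRegular p) (hq : IsRegular q) (ha : IsRegular a)
    (hb : IsRegular b) : UniformMemLp (fun i => nlsSource (p i) (q i) (a i) (b i)) 1 :=
  ((hp.memLp_dx.mul ha.memLp_dx).sub (hq.memLp_dx.mul hb.memLp_dx) le_rfl).const_smul _

theorem decay_nlsSource (hp : IsRegular p) (hq : IsRegular q) (ha : IsRegular a)
    (hb : IsRegular b) : LocallyUniformDecay fun i => nlsSource (p i) (q i) (a i) (b i) :=
  ((hp.decay_dx.mul ha.decay_dx).sub (hq.decay_dx.mul hb.decay_dx)).const_smul _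

end Bounds

theorem isBalanced_nlsEnergy {h : ℝ} (hh : h ≠ 0) (hp : IsRegular fun _ : Unit => p)
    (hq : IsRegular fun _ : Unit => q) (ha : IsRegular fun _ : Unit => a)
    (hb : IsRegular fun _ : Unit => b) (hp_t : dt p = a - dx (dx q))
    (hq_t : dt q = dx (dx p) - b) :
    IsBalanced (nlsEnergy (avg h p) (avg h q))
      (nlsSource (avg h p) (avg h q) (avg h a) (avg h b)) := by
  have hcomp {f : SmoothField} (hf : IsRegular fun _ : Unit => f) :=
    hf.avg.comp (continuous_const (y := h) (X := Unit))
  have hflux : UniformMemLp (fun _ : Unit => (2 : ℝ) • (dx (avg h q) * dx (dx (avg h p)) -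
      dx (avg h p) * dx (dx (avg h q)))) 1 :=
    (((hcomp hq).memLp_dx.mul (hp.memLp_dx_dx_avg hh)).sub
      ((hcomp hp).memLp_dx.mul (hq.memLp_dx_dx_avg hh)) le_rfl).const_smul 2
  refine ⟨uniformMemLp_nlsEnergy (hcomp hp) (hcomp hq),
    uniformMemLp_nlsSource (hcomp hp) (hcomp hq) (hcomp ha) (hcomp hb), _, 0, hflux, .zero, ?_⟩
  simp only [map_zero, add_zero]
  refine dt_nlsEnergy ?_ ?_
  · simp only [dir_avg, hp_t, map_sub]
  · simp only [dir_avg, hq_t, map_sub]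

theorem isBalanced_mul_self {ρ J : SmoothField} (hρ : IsRegular fun _ : Unit => ρ)
    (hJ : UniformMemLp (fun _ : Unit => J) 2) (hρ_t : dt ρ = -dx J) :
    IsBalanced (ρ * ρ) ((2 : ℝ) • (J * dx ρ)) := by
  refine ⟨hρ.memLp.mul hρ.memLp, (hJ.mul hρ.memLp_dx).const_smul 2, -(2 : ℝ) • (ρ * J), 0,
    (hρ.memLp.mul hJ).const_smul _, .zero, ?_⟩
  simp only [map_zero, add_zero, Derivation.map_smul, Derivation.leibniz, smul_eq_mul, hρ_t]
  ext t x
  simp only [add_apply, smul_apply, mul_apply, neg_apply]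
  ring

end Schrödinger

/-- The mass density `|u|²` of `u = p + iq`. -/
def massDensity (p q : SmoothField) : SmoothField := p * p + q * q

/-- The current `2 Im(ū ∂ₓu)` transporting the mass density of `u = p + iq`. -/
noncomputable def massCurrent (p q : SmoothField) : SmoothField := (2 : ℝ) • (p * dx q - q * dx p)

/-- The real potential `W = αv + βρ` for which the Schrödinger equation reads `i∂ₜu + ∂ₓ²u = Wu`. -/
def potential (α β : ℝ) (v ρ : SmoothField) : SmoothField := α • v + β • ρ

/-- The Schrödinger–KdV system for `u = p + iq` and `v`, split into real and imaginary parts,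
with the regularity of its components. -/
structure IsRealSolution (α β γ : ℝ) (p q v : SmoothField) : Prop where
  regular_p : IsRegular fun _ : Unit => p
  regular_q : IsRegular fun _ : Unit => q
  regular_v : IsRegular fun _ : Unit => v
  dt_p : dt p = potential α β v (massDensity p q) * q - dx (dx q)
  dt_q : dt q = dx (dx p) - potential α β v (massDensity p q) * p
  dt_v : dt v = dx (kdvForce γ v (massDensity p q)) - dx (dx (dx v))

section

variable (α β γ : ℝ) (p q v : SmoothField) (h : ℝ)

/-- The energy density of the averaged solution. At `h = 0` it is the density of `I₂`. -/
noncomputable def energyDensity : SmoothField :=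
  α • kdvEnergy γ (avg h v) (mid h v) (avg h (massDensity p q)) +
    γ • nlsEnergy (avg h p) (avg h q) +
    (β * γ / 2) • (massDensity p q * massDensity p q)

/-- The source of `energyDensity`, a total derivative at `h = 0`. -/
noncomputable def energySource : SmoothField :=
  α • kdvSource γ (avg h v) (mid h v) (avg h (massDensity p q)) (avg h (massCurrent p q))
      (avg h (dx (kdvForce γ v (massDensity p q)))) (mid h (dx (kdvForce γ v (massDensity p q)))) +
    γ • nlsSource (avg h p) (avg h q) (avg h (potential α β v (massDensity p q) * q))
      (avg h (potential α β v (massDensity p q) * p)) +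
    (β * γ / 2) • (2 : ℝ) • (massCurrent p q * dx (massDensity p q))

theorem energySource_zero :
    energySource α β γ p q v 0 = dx ((α / 2) • (kdvForce γ v (massDensity p q) *
      kdvForce γ v (massDensity p q))) := by
  simp only [energySource, kdvSource, nlsSource, massCurrent, massDensity, potential, kdvForce,
    avg_zero, mid_zero, map_add, map_sub, Derivation.map_smul, Derivation.leibniz, smul_eq_mul]
  ext t x
  simp only [add_apply, sub_apply, smul_apply, mul_apply]
  ring

end

namespace IsRealSolution

variable {α β γ : ℝ} {p q v : SmoothField}

theorem regular_massDensity (hsol : IsRealSolution α β γ p q v) :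
    IsRegular fun _ : Unit => massDensity p q :=
  (hsol.regular_p.mul hsol.regular_p).add (hsol.regular_q.mul hsol.regular_q)

theorem regular_potential (hsol : IsRealSolution α β γ p q v) :
    IsRegular fun _ : Unit => potential α β v (massDensity p q) :=
  (hsol.regular_v.const_smul α).add (hsol.regular_massDensity.const_smul β)

theorem regular_force (hsol : IsRealSolution α β γ p q v) :
    IsRegular fun _ : Unit => kdvForce γ v (massDensity p q) :=
  isRegular_kdvForce hsol.regular_v hsol.regular_massDensity

theorem memLp_massCurrent (hsol : IsRealSolution α β γ p q v) :
    UniformMemLp (fun _ : Unit => massCurrent p q) 2 :=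
  ((hsol.regular_p.memLp_top.mul hsol.regular_q.memLp_dx).sub
    (hsol.regular_q.memLp_top.mul hsol.regular_p.memLp_dx) one_le_two).const_smul 2

theorem decay_massCurrent (hsol : IsRealSolution α β γ p q v) :
    LocallyUniformDecay fun _ : Unit => massCurrent p q :=
  ((hsol.regular_p.decay.mul hsol.regular_q.decay_dx).sub
    (hsol.regular_q.decay.mul hsol.regular_p.decay_dx)).const_smul 2

theorem dt_massDensity (hsol : IsRealSolution α β γ p q v) :
    dt (massDensity p q) = -dx (massCurrent p q) := by
  simp only [massDensity, massCurrent, map_add, map_sub, Derivation.map_smul, Derivation.leibniz,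
    smul_eq_mul, hsol.dt_p, hsol.dt_q]
  ext t x
  simp only [add_apply, sub_apply, smul_apply, mul_apply, neg_apply]
  ring

theorem isBalanced_energyDensity (hsol : IsRealSolution α β γ p q v) {h : ℝ} (hh : h ≠ 0) :
    IsBalanced (energyDensity α β γ p q v h) (energySource α β γ p q v h) :=
  (((isBalanced_kdvEnergy hh hsol.regular_v hsol.regular_massDensity hsol.memLp_massCurrent
    hsol.dt_v hsol.dt_massDensity).const_smul α).add
    ((isBalanced_nlsEnergy hh hsol.regular_p hsol.regular_q
      (hsol.regular_potential.mul hsol.regular_q) (hsol.regular_potential.mul hsol.regular_p)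
      hsol.dt_p hsol.dt_q).const_smul γ)).add
    ((isBalanced_mul_self hsol.regular_massDensity hsol.memLp_massCurrent
      hsol.dt_massDensity).const_smul (β * γ / 2))

theorem decay_energyDensity (hsol : IsRealSolution α β γ p q v) :
    LocallyUniformDecay (energyDensity α β γ p q v) := by
  have hkdv := decay_kdvEnergy (γ := γ) hsol.regular_v.avg hsol.regular_v.mid
    hsol.regular_massDensity.avg
  have hnls := decay_nlsEnergy hsol.regular_p.avg hsol.regular_q.avg
  have hmass := (hsol.regular_massDensity.decay.mul hsol.regular_massDensity.decay).comp
    (φ := fun _ : ℝ => ()) continuous_const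
  exact ((hkdv.const_smul α).add (hnls.const_smul γ)).add (hmass.const_smul (β * γ / 2))

theorem memLp_energySource (hsol : IsRealSolution α β γ p q v) :
    UniformMemLp (energySource α β γ p q v) 1 := by
  have hkdv := uniformMemLp_kdvSource (γ := γ) hsol.regular_v.avg hsol.regular_v.mid
    hsol.regular_massDensity.avg
    ((hsol.memLp_massCurrent.comp fun _ => ()).avg id one_le_two ENNReal.ofNat_ne_top)
    ((hsol.regular_force.memLp_dx.comp fun _ => ()).avg id one_le_two ENNReal.ofNat_ne_top)
    ((hsol.regular_force.memLp_dx.comp fun _ => ()).mid id one_le_two)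
  have hnls := uniformMemLp_nlsSource hsol.regular_p.avg hsol.regular_q.avg
    (hsol.regular_potential.mul hsol.regular_q).avg (hsol.regular_potential.mul hsol.regular_p).avg
  have hmass := ((hsol.memLp_massCurrent.mul hsol.regular_massDensity.memLp_dx (r := 1)).comp
    fun _ : ℝ => ()).const_smul 2
  exact ((hkdv.const_smul α).add (hnls.const_smul γ) le_rfl).add (hmass.const_smul (β * γ / 2))
    le_rfl

theorem decay_energySource (hsol : IsRealSolution α β γ p q v) :
    LocallyUniformDecay (energySource α β γ p q v) := by
  have hkdv := decay_kdvSource (γ := γ) hsol.regular_v.avg hsol.regular_v.mid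
    hsol.regular_massDensity.avg hsol.decay_massCurrent.avg hsol.regular_force.decay_dx.avg
    hsol.regular_force.decay_dx.mid
  have hnls := decay_nlsSource hsol.regular_p.avg hsol.regular_q.avg
    (hsol.regular_potential.mul hsol.regular_q).avg (hsol.regular_potential.mul hsol.regular_p).avg
  have hmass := ((hsol.decay_massCurrent.mul hsol.regular_massDensity.decay_dx).comp
    (φ := fun _ : ℝ => ()) continuous_const).const_smul 2
  exact ((hkdv.const_smul α).add (hnls.const_smul γ)).add (hmass.const_smul (β * γ / 2))

theorem integral_energySource_zero (hsol : IsRealSolution α β γ p q v) (t : ℝ) :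
    ∫ x, energySource α β γ p q v 0 t x = 0 := by
  have hsq : LocallyUniformDecay fun _ : Unit => (α / 2) • (kdvForce γ v (massDensity p q) *
      kdvForce γ v (massDensity p q)) :=
    (hsol.regular_force.decay.mul hsol.regular_force.decay).const_smul _
  have hsource := hsol.decay_energySource.integrable 0 t
  rw [energySource_zero] at hsource ⊢
  exact integral_dx_eq_zero (hsq.integrable () t) hsource

theorem integral_energyDensity_eq (hsol : IsRealSolution α β γ p q v) (a b : ℝ) :
    ∫ x, energyDensity α β γ p q v 0 b x = ∫ x, energyDensity α β γ p q v 0 a x :=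
  integral_eq_of_isBalanced_family (fun _ hh => hsol.isBalanced_energyDensity hh)
    hsol.memLp_energySource hsol.decay_energyDensity hsol.decay_energySource
    hsol.integral_energySource_zero a b

end IsRealSolution

/-! ### Regular solutions in real form -/

theorem LocallyUniformDecay.of_schwartzMap {f : SmoothField}
    (hf : ∀ t, ∃ g : 𝓢(ℝ, ℝ), ∀ x, g x = f t x) : LocallyUniformDecay fun _ : Unit => f where
  continuous t := (f.continuous_slice t).comp continuous_snd
  bound t _ := by
    obtain ⟨g, hg⟩ := hf t
    obtain ⟨A, -, hA⟩ := g.decay 0 0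
    obtain ⟨B, -, hB⟩ := g.decay 2 0
    simp only [pow_zero, one_mul, norm_iteratedFDeriv_zero, Real.norm_eq_abs, sq_abs] at hA hB
    refine ⟨A + B, .of_forall fun _ x => ?_⟩
    rw [← div_eq_mul_inv, le_div_iff₀ (by positivity), ← hg]
    linarith [hA x, hB x]

theorem exists_schwartzMap_dx {f : SmoothField} (hf : ∀ t, ∃ g : 𝓢(ℝ, ℝ), ∀ x, g x = f t x)
    (t : ℝ) : ∃ g : 𝓢(ℝ, ℝ), ∀ x, g x = dx f t x := by
  obtain ⟨g, hg⟩ := hf t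
  refine ⟨SchwartzMap.derivCLM ℝ ℝ g, fun x => ?_⟩
  rw [SchwartzMap.derivCLM_apply, show ⇑g = f t from funext hg, (f.hasDerivAt_dx t x).deriv]

theorem IsRegular.of_schwartzMap {f : SmoothField} (hf : ∀ t, ∃ g : 𝓢(ℝ, ℝ), ∀ x, g x = f t x)
    {C : ℝ} (hC : ∀ t, (∫ x, f t x ^ 2) + ∫ x, dx f t x ^ 2 ≤ C) :
    IsRegular fun _ : Unit => f := by
  have hdecay := LocallyUniformDecay.of_schwartzMap hf
  have hdecay_dx := LocallyUniformDecay.of_schwartzMap (exists_schwartzMap_dx hf)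
  refine ⟨.of_integral_sq_le (C := C) hdecay.memLp_two fun _ t => ?_,
    .of_integral_sq_le (C := C) hdecay_dx.memLp_two fun _ t => ?_, hdecay, hdecay_dx⟩
  · exact (le_add_of_nonneg_right (integral_nonneg fun _ => sq_nonneg _)).trans (hC t)
  · exact (le_add_of_nonneg_left (integral_nonneg fun _ => sq_nonneg _)).trans (hC t)

/-- The complex field `p + iq`. -/
def toComplex (p q : SmoothField) (t x : ℝ) : ℂ := p t x + q t x * Complex.I

theorem exists_eq_toComplex {u : ℝ → ℝ → ℂ} (hu : ContDiff ℝ ∞ (Function.uncurry u)) :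
    ∃ p q : SmoothField, u = toComplex p q :=
  ⟨⟨fun t x => (u t x).re, mem_smoothFields.2 (Complex.reCLM.contDiff.comp hu)⟩,
    ⟨fun t x => (u t x).im, mem_smoothFields.2 (Complex.imCLM.contDiff.comp hu)⟩,
    funext₂ fun _ _ => (Complex.re_add_im _).symm⟩

section toComplex

variable (p q : SmoothField) (t x : ℝ)

theorem norm_toComplex_sq : ‖toComplex p q t x‖ ^ 2 = massDensity p q t x := by
  rw [toComplex, Complex.sq_norm, Complex.normSq_add_mul_I, massDensity]
  simp only [add_apply, mul_apply, sq]

theorem deriv_toComplex_dt :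
    deriv (fun s => toComplex p q s x) t = toComplex (dt p) (dt q) t x :=
  ((p.hasDerivAt_dt t x).ofReal_comp.add ((q.hasDerivAt_dt t x).ofReal_comp.mul_const _)).deriv

theorem deriv_toComplex_dx : deriv (toComplex p q t) = toComplex (dx p) (dx q) t :=
  funext fun x =>
    ((p.hasDerivAt_dx t x).ofReal_comp.add ((q.hasDerivAt_dx t x).ofReal_comp.mul_const _)).deriv

theorem iteratedDeriv_dx (n : ℕ) (f : SmoothField) : iteratedDeriv n (f t) = dx^[n] f t := by
  induction n generalizing f with
  | zero => exact iteratedDeriv_zero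
  | succ n ih => rw [iteratedDeriv_succ', funext fun x => (f.hasDerivAt_dx t x).deriv, ih,
      Function.iterate_succ_apply]

variable {p q t} in
theorem integral_norm_toComplex_sq (hp : MemLp (p t) 2) (hq : MemLp (q t) 2) :
    ∫ x, ‖toComplex p q t x‖ ^ 2 = (∫ x, p t x ^ 2) + ∫ x, q t x ^ 2 := by
  rw [← integral_add hp.integrable_sq hq.integrable_sq]
  simp only [norm_toComplex_sq, massDensity, add_apply, mul_apply, pow_two (p t _),
    pow_two (q t _)]

end toComplex

variable {p q v : SmoothField} {α β γ : ℝ}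

theorem dt_eq_of_schrodinger (h : ∀ t x : ℝ,
      Complex.I * deriv (fun s => toComplex p q s x) t + iteratedDeriv 2 (toComplex p q t) x
        = (α : ℂ) * toComplex p q t x * (v t x : ℂ) +
          (β : ℂ) * toComplex p q t x * (‖toComplex p q t x‖ : ℂ) ^ 2) :
    dt p = potential α β v (massDensity p q) * q - dx (dx q) ∧
      dt q = dx (dx p) - potential α β v (massDensity p q) * p := by
  have heq (t x : ℝ) := h t x
  simp only [iteratedDeriv_succ, iteratedDeriv_zero, deriv_toComplex_dt, deriv_toComplex_dx,
    ← Complex.ofReal_pow, norm_toComplex_sq] at heq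
  constructor <;> ext t x
  · have him := congr_arg Complex.im (heq t x)
    simp only [toComplex, Complex.add_im, Complex.mul_im, Complex.I_re, Complex.ofReal_im,
      Complex.ofReal_re, Complex.I_im, mul_one, mul_zero, add_zero, zero_add, zero_mul,
      Complex.add_re, Complex.mul_re, sub_self, one_mul, sub_zero] at him
    simp only [potential, sub_apply, mul_apply, add_apply, smul_apply]
    linarith
  · have hre := congr_arg Complex.re (heq t x)
    simp only [toComplex, Complex.add_re, Complex.mul_re, Complex.I_re, Complex.ofReal_re, mul_zero,
      Complex.ofReal_im, Complex.I_im, mul_one, sub_self, add_zero, zero_mul, Complex.add_im,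
      Complex.mul_im, zero_add, one_mul, zero_sub, sub_zero] at hre
    simp only [potential, sub_apply, mul_apply, add_apply, smul_apply]
    linarith

theorem dt_eq_of_kdv (h : ∀ t x : ℝ,
      deriv (fun s => v s x) t + iteratedDeriv 3 (v t) x + v t x * deriv (v t) x
        = γ * deriv (fun y => ‖toComplex p q t y‖ ^ 2) x) :
    dt v = dx (kdvForce γ v (massDensity p q)) - dx (dx (dx v)) := by
  ext t x
  have heq := h t x
  simp only [norm_toComplex_sq, iteratedDeriv_dx, (v.hasDerivAt_dt t x).deriv,
    (v.hasDerivAt_dx t x).deriv, ((massDensity p q).hasDerivAt_dx t x).deriv,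
    Function.iterate_succ_apply, Function.iterate_zero_apply] at heq
  simp only [kdvForce, map_sub, Derivation.map_smul, Derivation.leibniz, smul_eq_mul, sub_apply,
    add_apply, smul_apply, mul_apply]
  linarith

theorem energyDensity_zero_apply (α β γ : ℝ) (p q v : SmoothField) (t x : ℝ) :
    energyDensity α β γ p q v 0 t x =
      α * γ * v t x * ‖toComplex p q t x‖ ^ 2 - α / 6 * v t x ^ 3 +
        β * γ / 2 * ‖toComplex p q t x‖ ^ 4 + α / 2 * deriv (v t) x ^ 2 +
        γ * ‖deriv (toComplex p q t) x‖ ^ 2 := by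
  rw [show ‖toComplex p q t x‖ ^ 4 = (‖toComplex p q t x‖ ^ 2) ^ 2 by ring, deriv_toComplex_dx,
    norm_toComplex_sq, norm_toComplex_sq, (v.hasDerivAt_dx t x).deriv]
  simp only [energyDensity, kdvEnergy, nlsEnergy, massDensity, avg_zero, mid_zero, add_apply,
    sub_apply, mul_apply, smul_apply]
  ring

theorem exists_isRealSolution {u : ℝ → ℝ → ℂ} {v : ℝ → ℝ → ℝ} (h : IsSKdVSolution α β γ u v) :
    ∃ p q w : SmoothField, u = toComplex p q ∧ v = w ∧ IsRealSolution α β γ p q w := by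
  obtain ⟨hu, hv, hu_schwartz, hv_schwartz, hschrodinger, hkdv, C, hC⟩ := h
  obtain ⟨p, q, rfl⟩ := exists_eq_toComplex hu
  obtain ⟨v, rfl⟩ : ∃ w : SmoothField, v = w := ⟨⟨v, hv⟩, rfl⟩
  have hp_schwartz (t : ℝ) : ∃ g : 𝓢(ℝ, ℝ), ∀ x, g x = p t x := by
    obtain ⟨f, hf⟩ := hu_schwartz t
    exact ⟨SchwartzMap.postcompCLM Complex.reCLM f, fun x => by simp [hf, toComplex]⟩
  have hq_schwartz (t : ℝ) : ∃ g : 𝓢(ℝ, ℝ), ∀ x, g x = q t x := by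
    obtain ⟨f, hf⟩ := hu_schwartz t
    exact ⟨SchwartzMap.postcompCLM Complex.imCLM f, fun x => by simp [hf, toComplex]⟩
  have hmemLp {f : SmoothField} (hf : ∀ t, ∃ g : 𝓢(ℝ, ℝ), ∀ x, g x = f t x) (t : ℝ) :
      MemLp (f t) 2 := (LocallyUniformDecay.of_schwartzMap hf).memLp_two () t
  have hnonneg (f : SmoothField) (t : ℝ) : 0 ≤ ∫ x, f t x ^ 2 :=
    integral_nonneg fun _ => sq_nonneg _
  have hbound (t : ℝ) : (∫ x, p t x ^ 2) + (∫ x, q t x ^ 2) + ((∫ x, dx p t x ^ 2) +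
      ∫ x, dx q t x ^ 2) + (∫ x, v t x ^ 2) + ∫ x, dx v t x ^ 2 ≤ C := by
    rw [← integral_norm_toComplex_sq (hmemLp hp_schwartz t) (hmemLp hq_schwartz t),
      ← integral_norm_toComplex_sq (hmemLp (exists_schwartzMap_dx hp_schwartz) t)
        (hmemLp (exists_schwartzMap_dx hq_schwartz) t), ← deriv_toComplex_dx]
    simpa only [(v.hasDerivAt_dx t _).deriv] using hC t
  obtain ⟨hp_t, hq_t⟩ := dt_eq_of_schrodinger hschrodinger
  refine ⟨p, q, v, rfl, rfl, .of_schwartzMap (C := C) hp_schwartz fun t => ?_,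
    .of_schwartzMap (C := C) hq_schwartz fun t => ?_,
    .of_schwartzMap (C := C) hv_schwartz fun t => ?_, hp_t, hq_t, dt_eq_of_kdv hkdv⟩
  all_goals
    linarith [hbound t, hnonneg p t, hnonneg q t, hnonneg v t, hnonneg (dx p) t,
      hnonneg (dx q) t, hnonneg (dx v) t]

end SKdV

/-- Conservation of the energy
    `I₂(t) = ∫ (αγ v |u|² - (α/6) v³ + (βγ/2) |u|⁴ + (α/2)(∂ₓv)² + γ |∂ₓu|²)`
    for regular solutions of the Schrödinger–KdV system. -/
theorem skdv_conservation_I2 (α β γ : ℝ)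
    (u : ℝ → ℝ → ℂ) (v : ℝ → ℝ → ℝ) (hsol : IsSKdVSolution α β γ u v) :
    ∀ t : ℝ,
      (∫ x : ℝ, (α * γ * v t x * ‖u t x‖ ^ 2 - α / 6 * (v t x) ^ 3 +
          β * γ / 2 * ‖u t x‖ ^ 4 + α / 2 * (deriv (v t) x) ^ 2 +
          γ * ‖deriv (u t) x‖ ^ 2))
        = ∫ x : ℝ, (α * γ * v 0 x * ‖u 0 x‖ ^ 2 - α / 6 * (v 0 x) ^ 3 +
            β * γ / 2 * ‖u 0 x‖ ^ 4 + α / 2 * (deriv (v 0) x) ^ 2 +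
            γ * ‖deriv (u 0) x‖ ^ 2) := by
  intro t
  obtain ⟨p, q, w, rfl, rfl, hreal⟩ := SKdV.exists_isRealSolution hsol
  simpa only [SKdV.energyDensity_zero_apply] using hreal.integral_energyDensity_eq 0 t
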